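/- Let d ≥ 2 be an integer, let p, q, r ∈ [1,∞), and let A > 0. Suppose that (∫_{S^{d−1}} (∫_{ξ^⊥} (∫_ℝ f(x + tξ) dt)^r dx)^{q/r} dΩ(ξ))^{1/q} ≤ A ‖f‖_{L^p(ℝ^d)} for every nonnegative measurable f supported in the unit ball B(0,1) ⊂ ℝ^d, where Ω is surface measure on the unit sphere S^{d−1} and the inner integral is over the hyperplane ξ^⊥ with its (d−1)-dimensional Lebesgue measure. Then there is a constant B > 0 (depending only on d, p, q, r) such that for every δ ∈ (0,1] and every nonnegative measurable f supported in B(0,1), ‖K_δ[f]‖_{L^q(S^{d−1},Ω)} ≤ B A δ^{−(d−1)/r} ‖f‖_{L^p(ℝ^d)}. -/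

import Mathlib

open MeasureTheory ENNReal

noncomputable section

/-- `ℝ^d` with the Euclidean structure. -/
abbrev Euc (n : ℕ) := EuclideanSpace ℝ (Fin n)

/-- Surface measure on the unit sphere `S^{d-1}`, realized as `(d-1)`-dimensional
Hausdorff measure restricted to the sphere. -/
def sphereMeasure (d : ℕ) : Measure (Euc d) :=
  (μH[(d:ℝ) - 1] : Measure (Euc d)).restrict (Metric.sphere (0 : Euc d) 1)

/-- `τ_δ(ξ,a)`: the `δ`-neighborhood of the line segment with endpoints `a` and
`a + ξ`. -/
def tube (d : ℕ) (δ : ℝ) (ξ a : Euc d) : Set (Euc d) :=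
  Metric.thickening δ (segment ℝ a (a + ξ))

/-- The Kakeya maximal operator at scale `δ`. -/
def kakeyaMax (d : ℕ) (δ : ℝ) (f : Euc d → ℝ≥0∞) (ξ : Euc d) : ℝ≥0∞ :=
  ⨆ a : Euc d, (volume (tube d δ ξ a))⁻¹ * ∫⁻ y in tube d δ ξ a, f y

/-- The linear parametrisation `(t, x) ↦ x + t ξ` of `ℝ^d` is volume preserving. -/
theorem mp_param {d : ℕ} (ξ : Euc d) (hξ : ‖ξ‖ = 1) :
    MeasurePreserving (fun z : ℝ × ↥((ℝ ∙ ξ)ᗮ) => (z.2 : Euc d) + z.1 • ξ)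
      (volume.prod volume) volume := by
  have h1 : MeasurePreserving (LinearIsometryEquiv.toSpanUnitSingleton (𝕜 := ℝ) ξ hξ) :=
    LinearIsometryEquiv.measurePreserving _
  have h2 : MeasurePreserving (id : ↥((ℝ ∙ ξ)ᗮ) → ↥((ℝ ∙ ξ)ᗮ)) := MeasurePreserving.id _
  have h3 := h1.prod h2
  have h4 := WithLp.volume_preserving_toLp (↥(ℝ ∙ ξ)) (↥((ℝ ∙ ξ)ᗮ))
  have h5 := ((ℝ ∙ ξ).orthogonalDecomposition.symm).measurePreserving
  have h6 := h5.comp (h4.comp h3)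
  have hfun : (fun z : ℝ × ↥((ℝ ∙ ξ)ᗮ) => (z.2 : Euc d) + z.1 • ξ) =
      (ℝ ∙ ξ).orthogonalDecomposition.symm ∘ WithLp.toLp 2 ∘
        Prod.map (LinearIsometryEquiv.toSpanUnitSingleton (𝕜 := ℝ) ξ hξ) id := by
    funext z
    have := congrArg (fun L : WithLp 2 (↥(ℝ ∙ ξ) × ↥((ℝ ∙ ξ)ᗮ)) →L[ℝ] Euc d => L (WithLp.toLp 2
      (LinearIsometryEquiv.toSpanUnitSingleton (𝕜 := ℝ) ξ hξ z.1, z.2)))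
      (Submodule.coe_orthogonalDecomposition_symm (K := ℝ ∙ ξ))
    refine Eq.trans ?_ this.symm
    simp [add_comm]
  rw [hfun]
  exact h6

theorem norm_le_norm_add {d : ℕ} (ξ : Euc d) (x : ↥((ℝ ∙ ξ)ᗮ)) (c : ℝ) :
    ‖x‖ ≤ ‖(x : Euc d) + c • ξ‖ := by
  have h : inner ℝ (x : Euc d) (c • ξ) = 0 := by
    rw [inner_smul_right, Submodule.mem_orthogonal_singleton_iff_inner_left.1 x.2, mul_zero]
  have h2 := norm_add_sq_real (x : Euc d) (c • ξ)
  rw [h] at h2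
  rw [Submodule.coe_norm]
  exact abs_le_of_sq_le_sq' (by nlinarith [sq_nonneg ‖c • ξ‖]) (norm_nonneg _) |>.2

theorem exists_decomp {d : ℕ} (ξ a : Euc d) :
    ∃ (x : ↥((ℝ ∙ ξ)ᗮ)) (t : ℝ), a = (x : Euc d) + t • ξ := by
  obtain ⟨y, hy, z, hz, h⟩ := (ℝ ∙ ξ).exists_add_mem_mem_orthogonal a
  obtain ⟨t, rfl⟩ := Submodule.mem_span_singleton.1 hy
  exact ⟨⟨z, hz⟩, t, by rw [h, add_comm]⟩

theorem tube_sub {d : ℕ} (δ : ℝ) (ξ : Euc d) (x₀ : ↥((ℝ ∙ ξ)ᗮ)) (t₀ : ℝ)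
    (x : ↥((ℝ ∙ ξ)ᗮ)) (t : ℝ)
    (h : (x : Euc d) + t • ξ ∈ tube d δ ξ ((x₀ : Euc d) + t₀ • ξ)) :
    x ∈ Metric.ball x₀ δ := by
  obtain ⟨z, hz, hd⟩ := Metric.mem_thickening_iff.1 h
  rw [segment_eq_image'] at hz
  obtain ⟨s, hs, rfl⟩ := hz
  rw [Metric.mem_ball, dist_eq_norm]
  refine (norm_le_norm_add ξ (x - x₀) (t - t₀ - s)).trans_lt ?_
  rw [dist_eq_norm] at hd
  have heq : ((x - x₀ : ↥((ℝ ∙ ξ)ᗮ)) : Euc d) + (t - t₀ - s) • ξ = (x : Euc d) + t • ξ -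
      ((x₀ : Euc d) + t₀ • ξ + s • ((x₀ : Euc d) + t₀ • ξ + ξ - ((x₀ : Euc d) + t₀ • ξ))) := by
    push_cast
    module
  rw [heq]
  exact hd

theorem sub_tube {d : ℕ} (δ : ℝ) (ξ : Euc d) (x₀ : ↥((ℝ ∙ ξ)ᗮ)) (t₀ : ℝ)
    (x : ↥((ℝ ∙ ξ)ᗮ)) (t : ℝ) (hx : x ∈ Metric.ball x₀ δ) (ht : t ∈ Set.Icc t₀ (t₀ + 1)) :
    (x : Euc d) + t • ξ ∈ tube d δ ξ ((x₀ : Euc d) + t₀ • ξ) := by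
  refine Metric.mem_thickening_iff.2 ⟨(x₀ : Euc d) + t • ξ, ?_, ?_⟩
  · rw [segment_eq_image']
    refine ⟨t - t₀, ⟨by linarith [ht.1], by linarith [ht.2]⟩, ?_⟩
    simp only
    module
  · rw [dist_add_right]
    exact hx

theorem vol_tube_ge {d : ℕ} (δ : ℝ) (ξ a : Euc d) (hξ : ‖ξ‖ = 1) (x₀ : ↥((ℝ ∙ ξ)ᗮ)) (t₀ : ℝ)
    (ha : a = (x₀ : Euc d) + t₀ • ξ) :
    volume (Metric.ball x₀ δ) ≤ volume (tube d δ ξ a) := by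
  subst ha
  have hm : MeasurableSet (tube d δ ξ ((x₀ : Euc d) + t₀ • ξ)) :=
    Metric.isOpen_thickening.measurableSet
  rw [← (mp_param ξ hξ).measure_preimage hm.nullMeasurableSet]
  calc volume (Metric.ball x₀ δ)
      = (volume.prod volume) (Set.Icc t₀ (t₀ + 1) ×ˢ Metric.ball x₀ δ) := by
        rw [Measure.prod_prod]; simp
    _ ≤ _ := measure_mono (fun z hz => sub_tube δ ξ x₀ t₀ z.2 z.1 hz.2 hz.1)

theorem int_tube_le {d : ℕ} (δ : ℝ) (ξ a : Euc d) (hξ : ‖ξ‖ = 1) (x₀ : ↥((ℝ ∙ ξ)ᗮ)) (t₀ : ℝ)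
    (ha : a = (x₀ : Euc d) + t₀ • ξ) (f : Euc d → ℝ≥0∞) (hf : Measurable f) :
    ∫⁻ y in tube d δ ξ a, f y ≤
      ∫⁻ x in Metric.ball x₀ δ, ∫⁻ t : ℝ, f ((x : Euc d) + t • ξ) := by
  subst ha
  have hm : MeasurableSet (tube d δ ξ ((x₀ : Euc d) + t₀ • ξ)) :=
    Metric.isOpen_thickening.measurableSet
  have hΦ := (mp_param ξ hξ).measurable
  rw [← lintegral_indicator hm, ← (mp_param ξ hξ).lintegral_comp (hf.indicator hm),
    lintegral_prod_symm _ (by exact ((hf.indicator hm).comp hΦ).aemeasurable),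
    ← lintegral_indicator measurableSet_ball]
  refine lintegral_mono fun x => ?_
  by_cases hx : x ∈ Metric.ball x₀ δ
  · rw [Set.indicator_of_mem hx]
    exact lintegral_mono fun t => Set.indicator_le_self _ _ _
  · rw [Set.indicator_of_notMem hx]
    refine le_of_eq ?_
    rw [lintegral_eq_zero_iff' (by
      exact ((hf.indicator hm).comp (hΦ.comp (measurable_id.prodMk measurable_const))).aemeasurable)]
    refine Filter.Eventually.of_forall fun t => ?_
    exact Set.indicator_of_notMem (fun h => hx (tube_sub δ ξ x₀ t₀ x t h)) _

theorem holder_ball {α : Type*} [MeasurableSpace α] (μ : Measure α) (r : ℝ) (hr : 1 ≤ r)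
    (g : α → ℝ≥0∞) (hg : Measurable g) (s : Set α) :
    ∫⁻ x in s, g x ∂μ ≤ (∫⁻ x, g x ^ r ∂μ) ^ (1 / r) * μ s ^ (1 - 1 / r) := by
  have h := eLpNorm'_le_eLpNorm'_mul_rpow_measure_univ (μ := μ.restrict s) one_pos hr
    hg.aestronglyMeasurable
  simp only [eLpNorm', enorm_eq_self, ENNReal.rpow_one, div_one,
    Measure.restrict_apply_univ] at h
  refine h.trans ?_
  gcongr
  exact Measure.restrict_le_self

theorem kakeya_le {d : ℕ} (δ : ℝ) (ξ : Euc d) (hξ : ‖ξ‖ = 1) (r : ℝ) (hr : 1 ≤ r)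
    (f : Euc d → ℝ≥0∞) (hf : Measurable f) (V : ℝ≥0∞) (hV0 : V ≠ 0) (hVt : V ≠ ⊤)
    (hV : ∀ x₀ : ↥((ℝ ∙ ξ)ᗮ), volume (Metric.ball x₀ δ) = V) :
    kakeyaMax d δ f ξ ≤ V ^ (-(1 / r)) *
      (∫⁻ x : ↥((ℝ ∙ ξ)ᗮ), (∫⁻ t : ℝ, f ((x : Euc d) + t • ξ)) ^ r) ^ (1 / r) := by
  refine iSup_le fun a => ?_
  obtain ⟨x₀, t₀, ha⟩ := exists_decomp ξ a
  have h1 := vol_tube_ge δ ξ a hξ x₀ t₀ ha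
  have h2 := int_tube_le δ ξ a hξ x₀ t₀ ha f hf
  have hg : Measurable fun x : ↥((ℝ ∙ ξ)ᗮ) => ∫⁻ t : ℝ, f ((x : Euc d) + t • ξ) :=
    (hf.comp (mp_param ξ hξ).measurable).lintegral_prod_left'
  have h3 := holder_ball volume r hr _ hg (Metric.ball x₀ δ)
  rw [hV] at h1 h3
  calc _ ≤ V⁻¹ * ((∫⁻ x : ↥((ℝ ∙ ξ)ᗮ), (∫⁻ t : ℝ, f ((x : Euc d) + t • ξ)) ^ r) ^ (1 / r)
            * V ^ (1 - 1 / r)) := mul_le_mul' (ENNReal.inv_le_inv.2 h1) (h2.trans h3)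
    _ = (V⁻¹ * V ^ (1 - 1 / r)) *
        (∫⁻ x : ↥((ℝ ∙ ξ)ᗮ), (∫⁻ t : ℝ, f ((x : Euc d) + t • ξ)) ^ r) ^ (1 / r) := by ring
    _ = _ := by
      rw [← ENNReal.rpow_neg_one, ← ENNReal.rpow_add _ _ hV0 hVt]
      congr 2
      ring

/-- Volume of the `n`-dimensional unit ball. -/
def ballConst (n : ℕ) : ℝ := √Real.pi ^ n / Real.Gamma ((n : ℝ) / 2 + 1)

theorem ballConst_pos (n : ℕ) : 0 < ballConst n := by
  have := Real.pi_pos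
  have : 0 < Real.Gamma ((n : ℝ) / 2 + 1) := Real.Gamma_pos_of_pos (by positivity)
  unfold ballConst
  positivity

theorem vol_ball_perp {d : ℕ} (hd : 2 ≤ d) (ξ : Euc d) (hξ : ‖ξ‖ = 1) (δ : ℝ) (hδ : 0 < δ)
    (x₀ : ↥((ℝ ∙ ξ)ᗮ)) :
    volume (Metric.ball x₀ δ) = ENNReal.ofReal (δ ^ ((d : ℝ) - 1) * ballConst (d - 1)) := by
  have hne : ξ ≠ 0 := by
    rintro rfl
    simp at hξ
  have : Fact (Module.finrank ℝ (Euc d) = (d - 1) + 1) := ⟨by simp; omega⟩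
  have hfr : Module.finrank ℝ ↥((ℝ ∙ ξ)ᗮ) = d - 1 :=
    Submodule.finrank_orthogonal_span_singleton hne
  have : Nontrivial ↥((ℝ ∙ ξ)ᗮ) := Module.nontrivial_of_finrank_pos (R := ℝ) (by omega)
  rw [InnerProductSpace.volume_ball, hfr, ← ENNReal.ofReal_pow hδ.le,
    ← ENNReal.ofReal_mul (by positivity)]
  congr 2
  rw [← Real.rpow_natCast, Nat.cast_sub (by omega), Nat.cast_one]

/-- The mixed-norm x-ray bound (in its conventional form over the sphere) implies
the corresponding Kakeya maximal operator bound
`‖K_δ[f]‖_{L^q(S^{d-1})} ≲ A δ^{-(d-1)/r} ‖f‖_{L^p}`. -/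
theorem statement8 (d : ℕ) (hd : 2 ≤ d) (p q r : ℝ)
    (hp : 1 ≤ p) (hq : 1 ≤ q) (hr : 1 ≤ r) (A : ℝ) (hA : 0 < A)
    (hbound : ∀ f : Euc d → ℝ≥0∞, Measurable f →
      (∀ z, z ∉ Metric.ball (0 : Euc d) 1 → f z = 0) →
      (∫⁻ ξ, (∫⁻ x : ↥((ℝ ∙ ξ)ᗮ), (∫⁻ t : ℝ, f ((x : Euc d) + t • ξ)) ^ r) ^ (q / r)
          ∂sphereMeasure d) ^ (1 / q)
        ≤ ENNReal.ofReal A * (∫⁻ z, f z ^ p) ^ (1 / p)) :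
    ∃ B : ℝ, 0 < B ∧ ∀ δ : ℝ, δ ∈ Set.Ioc (0:ℝ) 1 →
      ∀ f : Euc d → ℝ≥0∞, Measurable f →
        (∀ z, z ∉ Metric.ball (0 : Euc d) 1 → f z = 0) →
        (∫⁻ ξ, (kakeyaMax d δ f ξ) ^ q ∂sphereMeasure d) ^ (1 / q)
          ≤ ENNReal.ofReal (B * A * δ ^ (-((d:ℝ) - 1) / r)) *
              (∫⁻ z, f z ^ p) ^ (1 / p) := by
  have hc := ballConst_pos (d - 1)
  refine ⟨ballConst (d - 1) ^ (-(1 / r)), by positivity, ?_⟩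
  rintro δ ⟨hδ, -⟩ f hf hsupp
  have hq0 : 0 < q := by linarith
  have hr0 : 0 < r := by linarith
  set V : ℝ := δ ^ ((d : ℝ) - 1) * ballConst (d - 1) with hVdef
  have hV : 0 < V := by positivity
  set C : ℝ≥0∞ := ENNReal.ofReal V ^ (-(1 / r)) with hC
  have hCt : C ≠ ⊤ := by
    rw [hC, ENNReal.ofReal_rpow_of_pos hV]
    exact ENNReal.ofReal_ne_top
  have key : ∫⁻ ξ, (kakeyaMax d δ f ξ) ^ q ∂sphereMeasure d ≤
      C ^ q * ∫⁻ ξ, (∫⁻ x : ↥((ℝ ∙ ξ)ᗮ), (∫⁻ t : ℝ, f ((x : Euc d) + t • ξ)) ^ r) ^ (q / r)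
          ∂sphereMeasure d := by
    rw [← lintegral_const_mul' _ _ (ENNReal.rpow_ne_top_of_nonneg hq0.le hCt)]
    refine lintegral_mono_ae ?_
    filter_upwards [ae_restrict_mem (Metric.isClosed_sphere.measurableSet)] with ξ hξ
    have hξ1 : ‖ξ‖ = 1 := by simpa using hξ
    have h := kakeya_le δ ξ hξ1 r hr f hf (ENNReal.ofReal V) (by simpa using hV)
      ENNReal.ofReal_ne_top (vol_ball_perp hd ξ hξ1 δ hδ)
    refine (ENNReal.rpow_le_rpow h hq0.le).trans (le_of_eq ?_)
    rw [ENNReal.mul_rpow_of_nonneg _ _ hq0.le, ← ENNReal.rpow_mul _ (1 / r) q]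
    congr 2
    ring
  have hconst : C * ENNReal.ofReal A = ENNReal.ofReal
      (ballConst (d - 1) ^ (-(1 / r)) * A * δ ^ (-((d:ℝ) - 1) / r)) := by
    rw [hC, ENNReal.ofReal_rpow_of_pos hV, ← ENNReal.ofReal_mul (by positivity), hVdef,
      Real.mul_rpow (by positivity) hc.le, ← Real.rpow_mul hδ.le]
    have : ((d : ℝ) - 1) * -(1 / r) = -((d:ℝ) - 1) / r := by ring
    rw [this]
    congr 1
    ring
  calc _ ≤ _ := ENNReal.rpow_le_rpow key (by positivity)
    _ = C * _ := by
      rw [ENNReal.mul_rpow_of_nonneg _ _ (by positivity), ← ENNReal.rpow_mul,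
        mul_one_div_cancel hq0.ne', ENNReal.rpow_one]
    _ ≤ C * _ := mul_le_mul_right (hbound f hf hsupp) _
    _ = _ := by rw [← mul_assoc, hconst]

end
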